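/- arXiv:1106.3102 — 2 statements merged into one kernel-verified Lean document; each statement's English description precedes it below -/
import Mathlib

section
/- Let λ_j > λ_k > 0. Then Σ_{a=0}^∞ f_{λ_j}(a) · f_{λ_k}(a+1) < Σ_{a=0}^∞ f_{λ_k}(a) · f_{λ_j}(a+1). Equivalently, in the two-group winner-take-all setting with independent Poisson vote totals A_j (mean λ_j) and A_k (mean λ_k), the prize pivot of the group with the larger expected vote total is strictly smaller than that of the group with the smaller expected vote total. (Lemma 4, second claim.) -/
/-- The Poisson probability mass function with mean `l`: `f_l(a) = l^a e^{-l} / a!`. -/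
noncomputable def poissonPMF (l : ℝ) (a : ℕ) : ℝ := l ^ a * Real.exp (-l) / (Nat.factorial a)

/-!
Writing `f_l` for the Poisson mass function, `(a + 1) f_l(a + 1) = l f_l(a)` makes both
`x f_x(a) f_y(a + 1)` and `y f_y(a) f_x(a + 1)` equal to `(a + 1) f_x(a + 1) f_y(a + 1)`. Hence the
two prize pivots are inversely proportional to the expected vote totals of their groups, and they
are positive.
-/

/-- The prize pivot of a group whose vote total `A` has mean `x` against a group whose vote total
`B` has mean `y`, with `A` and `B` independent Poisson. It is encoded as the series for
`Pr(B = A + 1) = Pr(A + 1 ≥ B) - Pr(A ≥ B)`. -/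
noncomputable def prizePivot (x y : ℝ) : ℝ := ∑' a : ℕ, poissonPMF x a * poissonPMF y (a + 1)

theorem poissonPMF_nonneg {l : ℝ} (hl : 0 ≤ l) (a : ℕ) : 0 ≤ poissonPMF l a := by
  unfold poissonPMF
  positivity

theorem succ_mul_poissonPMF_succ (l : ℝ) (a : ℕ) :
    (a + 1) * poissonPMF l (a + 1) = l * poissonPMF l a := by
  simp only [poissonPMF, Nat.factorial_succ, Nat.cast_mul, Nat.cast_succ]
  field_simp
  ring

theorem summable_poissonPMF (l : ℝ) : Summable (poissonPMF l) :=
  ((Real.summable_pow_div_factorial l).mul_right (Real.exp (-l))).congr fun _ ↦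
    div_mul_eq_mul_div _ _ _

theorem summable_poissonPMF_mul_poissonPMF_succ (x y : ℝ) :
    Summable fun a : ℕ ↦ poissonPMF x a * poissonPMF y (a + 1) :=
  (summable_mul_of_summable_norm (summable_poissonPMF x).norm
    (summable_poissonPMF y).norm).comp_injective
      (i := fun a : ℕ ↦ (a, a + 1)) fun _ _ h ↦ congrArg Prod.fst h

theorem prizePivot_pos {x y : ℝ} (hx : 0 ≤ x) (hy : 0 < y) : 0 < prizePivot x y := by
  have nonneg (a : ℕ) : 0 ≤ poissonPMF x a * poissonPMF y (a + 1) :=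
    mul_nonneg (poissonPMF_nonneg hx a) (poissonPMF_nonneg hy.le (a + 1))
  have pos_zero : 0 < poissonPMF x 0 * poissonPMF y (0 + 1) := by
    simp only [poissonPMF, pow_zero]
    positivity
  exact (summable_poissonPMF_mul_poissonPMF_succ x y).tsum_pos nonneg 0 pos_zero

theorem mul_prizePivot_comm (x y : ℝ) : x * prizePivot x y = y * prizePivot y x := by
  have term_comm (a : ℕ) : x * (poissonPMF x a * poissonPMF y (a + 1)) =
      y * (poissonPMF y a * poissonPMF x (a + 1)) := by
    calc x * (poissonPMF x a * poissonPMF y (a + 1))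
        = (a + 1) * poissonPMF x (a + 1) * poissonPMF y (a + 1) := by
          rw [succ_mul_poissonPMF_succ, mul_assoc]
      _ = (a + 1) * poissonPMF y (a + 1) * poissonPMF x (a + 1) := mul_right_comm _ _ _
      _ = y * (poissonPMF y a * poissonPMF x (a + 1)) := by
          rw [succ_mul_poissonPMF_succ, mul_assoc]
  simp only [prizePivot, ← tsum_mul_left, term_comm]

/-- **Lemma 4, second claim.** If `λ_j > λ_k > 0`, then
`Σ_{a=0}^∞ f_{λ_j}(a) f_{λ_k}(a+1) < Σ_{a=0}^∞ f_{λ_k}(a) f_{λ_j}(a+1)`: in the two-group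
winner-take-all setting, the prize pivot of the group with the larger expected vote total
is strictly smaller than that of the group with the smaller expected vote total. -/
theorem two_group_pivot_lt (lj lk : ℝ) (hk : 0 < lk) (hjk : lk < lj) :
    (∑' a : ℕ, poissonPMF lj a * poissonPMF lk (a + 1))
      < ∑' a : ℕ, poissonPMF lk a * poissonPMF lj (a + 1) := by
  change prizePivot lj lk < prizePivot lk lj
  have hj : 0 < lj := hk.trans hjk
  refine lt_of_mul_lt_mul_left ?_ hk.le
  calc lk * prizePivot lj lk
      < lj * prizePivot lj lk := mul_lt_mul_of_pos_right hjk (prizePivot_pos hj.le hk)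
    _ = lk * prizePivot lk lj := mul_prizePivot_comm lj lk
end

section
/- Fix p > 0 and q > 0. For n > 0 let A_n and B_n be independent ℕ-valued random variables, Poisson-distributed with means np and nq respectively. Then as n → ∞, Pr(A_n = B_n) ∼ e^{−n(√p − √q)²} / (2 (pq)^{1/4} √(πn)); that is, Pr(A_n = B_n) · 2 (pq)^{1/4} √(πn) · e^{n(√p − √q)²} → 1. (Exact-tie asymptotic underlying Proposition 5 (pro_OP).) -/
/-!
The tie probability of two Poisson variables with means `x` and `y` is
`∑ e^{-(x+y)} (xy)^a / (a!)² = e^{-(x+y)} I₀(2√(xy))`, where `I₀` is the modified Bessel function.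
Integrating the exponential series termwise against Wallis' integrals gives
`I₀(t) = (2π)⁻¹ ∫_{-π}^{π} e^{t cos u} du`, and Laplace's method at the maximum `u = 0` of the
cosine gives `I₀(t) ∼ e^t / √(2πt)`. At `t = 2n√(pq)` the exponents combine through
`x + y - 2√(xy) = (√x - √y)²`.
-/

open Filter MeasureTheory Real Set
open scoped Nat Topology

section Laplace

variable {f : ℝ → ℝ} {κ : ℝ}

lemma tendsto_mul_comp_div_sqrt (hf : Tendsto (fun u ↦ f u / u ^ 2) (𝓝[≠] 0) (𝓝 κ)) {v : ℝ}
    (hv : v ≠ 0) : Tendsto (fun t ↦ t * f (v / √t)) atTop (𝓝 (κ * v ^ 2)) := by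
  have hw : Tendsto (fun t ↦ v / √t) atTop (𝓝[≠] 0) := by
    refine tendsto_nhdsWithin_iff.2 ⟨tendsto_const_nhds.div_atTop tendsto_sqrt_atTop, ?_⟩
    filter_upwards [eventually_gt_atTop 0] with t ht
    exact div_ne_zero hv (sqrt_ne_zero'.2 ht)
  refine ((hf.comp hw).mul_const (v ^ 2)).congr' ?_
  filter_upwards [eventually_gt_atTop 0] with t ht
  simp only [Function.comp_apply, div_pow, sq_sqrt ht.le]
  field_simp

lemma quasiMeasurePreserving_div_const {r : ℝ} (hr : r ≠ 0) :
    Measure.QuasiMeasurePreserving (· / r) volume volume := by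
  refine ⟨measurable_id.div_const r, ?_⟩
  simp only [div_eq_mul_inv, Real.map_volume_mul_right (inv_ne_zero hr)]
  exact Measure.smul_absolutelyContinuous

/-- The substitution `u = v / √t` turns the integrand into `exp (-t f(v / √t))`, which tends to
`exp (-κ v²)` and is dominated by `exp (-c v²)`. -/
theorem tendsto_sqrt_mul_setIntegral_exp_neg_mul {s : Set ℝ} {c : ℝ} (hs : MeasurableSet s)
    (hs₀ : s ∈ 𝓝 0) (hfm : AEStronglyMeasurable f (volume.restrict s)) (hc : 0 < c)
    (hfc : ∀ u ∈ s, c * u ^ 2 ≤ f u) (hf : Tendsto (fun u ↦ f u / u ^ 2) (𝓝[≠] 0) (𝓝 κ)) :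
    Tendsto (fun t ↦ √t * ∫ u in s, exp (-(t * f u))) atTop (𝓝 √(π / κ)) := by
  let F (t : ℝ) : ℝ → ℝ := s.indicator fun u ↦ exp (-(t * f u))
  have hscale (t : ℝ) : ∫ v, F t (v / √t) = √t * ∫ u in s, exp (-(t * f u)) := by
    rw [Measure.integral_comp_div, integral_indicator hs, abs_of_nonneg (sqrt_nonneg t),
      smul_eq_mul]
  have hmeas : ∀ᶠ t in atTop, AEStronglyMeasurable (fun v ↦ F t (v / √t)) := by
    filter_upwards [eventually_gt_atTop 0] with t ht
    have hF : AEStronglyMeasurable (F t) := (aestronglyMeasurable_indicator_iff hs).2 <|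
      continuous_exp.comp_aestronglyMeasurable (hfm.const_mul t).neg
    exact hF.comp_quasiMeasurePreserving (quasiMeasurePreserving_div_const (sqrt_ne_zero'.2 ht))
  have hdom : ∀ᶠ t in atTop, ∀ᵐ v, ‖F t (v / √t)‖ ≤ exp (-c * v ^ 2) := by
    filter_upwards [eventually_gt_atTop 0] with t ht
    refine .of_forall fun v ↦ ?_
    rw [norm_indicator_eq_indicator_norm]
    refine indicator_apply_le' (fun hv ↦ ?_) fun _ ↦ (exp_pos _).le
    rw [norm_of_nonneg (exp_pos _).le, exp_le_exp, neg_mul, neg_le_neg_iff]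
    calc c * v ^ 2 = t * (c * (v / √t) ^ 2) := by rw [div_pow, sq_sqrt ht.le]; field_simp
      _ ≤ t * f (v / √t) := mul_le_mul_of_nonneg_left (hfc _ hv) ht.le
  have hlim : ∀ᵐ v, Tendsto (fun t ↦ F t (v / √t)) atTop (𝓝 (exp (-κ * v ^ 2))) := by
    filter_upwards [Measure.ae_ne volume (0 : ℝ)] with v hv
    have hmem : ∀ᶠ t in atTop, v / √t ∈ s :=
      (tendsto_const_nhds.div_atTop tendsto_sqrt_atTop).eventually_mem hs₀
    rw [neg_mul]
    refine ((tendsto_mul_comp_div_sqrt hf hv).neg.rexp).congr' ?_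
    filter_upwards [hmem] with t ht
    simp only [F, indicator_of_mem ht]
  have := tendsto_integral_filter_of_dominated_convergence _ hmeas hdom
    (integrable_exp_neg_mul_sq hc) hlim
  simpa only [hscale, integral_gaussian] using this

end Laplace

lemma tendsto_one_sub_cos_div_sq : Tendsto (fun u ↦ (1 - cos u) / u ^ 2) (𝓝[≠] 0) (𝓝 (1 / 2)) := by
  have hsinc : Tendsto (fun u ↦ sinc (u / 2) ^ 2 / 2) (𝓝[≠] 0) (𝓝 (1 / 2)) := by
    have : Continuous fun u ↦ sinc (u / 2) ^ 2 / 2 := by fun_prop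
    simpa using (this.tendsto 0).mono_left nhdsWithin_le_nhds
  refine hsinc.congr' ?_
  filter_upwards [self_mem_nhdsWithin] with u (hu : u ≠ 0)
  have hcos : cos u = 1 - 2 * sin (u / 2) ^ 2 := by
    rw [sin_sq_eq_half_sub, mul_div_cancel₀ u two_ne_zero]
    ring
  rw [sinc_of_ne_zero (by positivity), hcos]
  field_simp
  ring

lemma tendsto_sqrt_mul_integral_exp_neg_mul_one_sub_cos :
    Tendsto (fun t ↦ √t * ∫ u in -π..π, exp (-(t * (1 - cos u)))) atTop (𝓝 √(2 * π)) := by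
  have hpi := pi_pos
  have key := tendsto_sqrt_mul_setIntegral_exp_neg_mul (f := fun u ↦ 1 - cos u) (s := Ioc (-π) π)
    (c := 2 / π ^ 2) measurableSet_Ioc (Ioc_mem_nhds (neg_neg_of_pos hpi) hpi)
    (by fun_prop) (by positivity) (fun u hu ↦ ?_) tendsto_one_sub_cos_div_sq
  · simp_rw [intervalIntegral.integral_of_le (neg_le_self hpi.le)]
    convert key using 3
    ring
  · linarith [cos_le_one_sub_mul_cos_sq (abs_le.2 (Ioc_subset_Icc_self hu))]

/-- The modified Bessel function `I₀` of the first kind and order zero on the real line, encoded by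
its power series. It expresses the tie probability of two Poisson variables. -/
noncomputable def besselI₀ (t : ℝ) : ℝ := ∑' k : ℕ, (t / 2) ^ (2 * k) / (k ! : ℝ) ^ 2

lemma integral_sin_pow_two_mul (k : ℕ) :
    ∫ u in 0..π, sin u ^ (2 * k) = π * k.centralBinom / 4 ^ k := by
  induction k with
  | zero => simp
  | succ k ih =>
    have hC : ((k + 1 : ℕ) * (k + 1).centralBinom : ℝ) = 2 * (2 * k + 1) * k.centralBinom := by
      exact_mod_cast k.succ_mul_centralBinom_succ
    have hrec : ∫ u in 0..π, sin u ^ (2 * k + 2) =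
        (2 * k + 1) / (2 * k + 2) * ∫ u in 0..π, sin u ^ (2 * k) := by
      rw [integral_sin_pow]
      simp
    rw [mul_add_one, hrec, ih]
    push_cast at hC
    field_simp
    linear_combination -2 * 4 ^ k * hC

lemma hasSum_integral_cosh_mul_sin (t : ℝ) :
    HasSum (fun k : ℕ ↦ π * ((t / 2) ^ (2 * k) / (k ! : ℝ) ^ 2))
      (∫ u in 0..π, cosh (t * sin u)) := by
  have hterm (k : ℕ) : ∫ u in 0..π, (t * sin u) ^ (2 * k) / (2 * k)! =
      π * ((t / 2) ^ (2 * k) / (k ! : ℝ) ^ 2) := by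
    have hC : (k.centralBinom * k ! * k ! : ℝ) = (2 * k)! := by
      rw [Nat.centralBinom_eq_two_mul_choose]
      exact_mod_cast (two_mul k ▸ Nat.add_choose_mul_factorial_mul_factorial k k)
    simp only [mul_pow, intervalIntegral.integral_div, intervalIntegral.integral_const_mul,
      integral_sin_pow_two_mul]
    rw [← hC, div_pow, pow_mul 2, show (2 : ℝ) ^ 2 = 4 by norm_num]
    have hC₀ : (k.centralBinom : ℝ) ≠ 0 := mod_cast k.centralBinom_ne_zero
    field_simp
  simp only [← hterm]
  refine intervalIntegral.hasSum_integral_of_dominated_convergence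
    (fun k _ ↦ |t| ^ (2 * k) / (2 * k)!) (fun k ↦ by fun_prop) (fun k ↦ .of_forall fun u _ ↦ ?_)
    (.of_forall fun u _ ↦ (hasSum_cosh |t|).summable) (by simp)
    (.of_forall fun u _ ↦ hasSum_cosh _)
  rw [norm_div, norm_pow, norm_mul, Real.norm_natCast, norm_eq_abs, norm_eq_abs]
  gcongr
  exact mul_le_of_le_one_right (abs_nonneg t) (abs_sin_le_one u)

lemma integral_cosh_mul_sin (t : ℝ) :
    ∫ u in 0..π, cosh (t * sin u) = (∫ u in -π..π, exp (t * cos u)) / 2 := by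
  let g (u : ℝ) : ℝ := exp (t * sin u)
  have hg : Continuous g := by fun_prop
  have hshift : ∫ u in -π..π, exp (t * cos u) = ∫ u in -π..π, g u := by
    have hper : Function.Periodic g (2 * π) := fun u ↦ by simp only [g, sin_add_two_pi]
    calc ∫ u in -π..π, exp (t * cos u) = ∫ u in -π..π, g (u + π / 2) := by
          simp only [g, sin_add_pi_div_two]
      _ = ∫ u in -π + π / 2..-π + π / 2 + 2 * π, g u := by
          rw [intervalIntegral.integral_comp_add_right]
          congr 1
          ring
      _ = ∫ u in -π..-π + 2 * π, g u := hper.intervalIntegral_add_eq _ _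
      _ = ∫ u in -π..π, g u := by
          congr 1
          ring
  calc ∫ u in 0..π, cosh (t * sin u) = ∫ u in 0..π, (g (-u) + g u) / 2 := by
        simp only [g, cosh_eq, sin_neg, mul_neg, add_comm]
    _ = ((∫ u in 0..π, g (-u)) + ∫ u in 0..π, g u) / 2 := by
        rw [intervalIntegral.integral_div, intervalIntegral.integral_add
          (Continuous.intervalIntegrable (by fun_prop) _ _) (hg.intervalIntegrable _ _)]
    _ = (∫ u in -π..π, exp (t * cos u)) / 2 := by
        rw [intervalIntegral.integral_comp_neg, neg_zero, hshift,
          intervalIntegral.integral_add_adjacent_intervals (hg.intervalIntegrable _ _)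
            (hg.intervalIntegrable _ _)]

theorem besselI₀_eq_integral (t : ℝ) :
    besselI₀ t = (∫ u in -π..π, exp (t * cos u)) / (2 * π) := by
  have hsum := (hasSum_integral_cosh_mul_sin t).tsum_eq
  rw [tsum_mul_left, integral_cosh_mul_sin] at hsum
  rw [besselI₀, eq_div_iff (by positivity)]
  linear_combination 2 * hsum

theorem tendsto_besselI₀_mul_sqrt_mul_exp_neg :
    Tendsto (fun t ↦ besselI₀ t * √(2 * π * t) * exp (-t)) atTop (𝓝 1) := by
  have hlim := tendsto_sqrt_mul_integral_exp_neg_mul_one_sub_cos.div_const √(2 * π)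
  rw [div_self (by positivity)] at hlim
  refine hlim.congr fun t ↦ ?_
  have hexp : ∫ u in -π..π, exp (-(t * (1 - cos u))) =
      exp (-t) * ∫ u in -π..π, exp (t * cos u) := by
    rw [← intervalIntegral.integral_const_mul]
    congr with u
    rw [← exp_add]
    ring_nf
  rw [hexp, besselI₀_eq_integral, div_eq_iff (by positivity),
    sqrt_mul (by positivity : 0 ≤ 2 * π)]
  have hsq : √(2 * π) ^ 2 = 2 * π := sq_sqrt (by positivity)
  generalize √(2 * π) = r at hsq ⊢
  field_simp
  rw [hsq]
  ring

theorem tsum_poissonPMF_mul_poissonPMF {x y : ℝ} (hxy : 0 ≤ x * y) :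
    ∑' a, poissonPMF x a * poissonPMF y a = exp (-(x + y)) * besselI₀ (2 * √(x * y)) := by
  rw [besselI₀, ← tsum_mul_left]
  refine tsum_congr fun a ↦ ?_
  rw [mul_div_cancel_left₀ _ two_ne_zero, pow_mul, sq_sqrt hxy, poissonPMF, poissonPMF, neg_add,
    exp_add]
  ring

lemma tsum_poissonPMF_mul_poissonPMF_mul_exp {x y : ℝ} (hx : 0 ≤ x) (hy : 0 ≤ y) :
    (∑' a, poissonPMF x a * poissonPMF y a) * exp ((√x - √y) ^ 2) =
      besselI₀ (2 * √(x * y)) * exp (-(2 * √(x * y))) := by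
  rw [tsum_poissonPMF_mul_poissonPMF (mul_nonneg hx hy), mul_comm (exp _), mul_assoc, ← exp_add]
  congr 2
  rw [sub_sq, sq_sqrt hx, sq_sqrt hy, sqrt_mul hx]
  ring

theorem tie_probability_asymptotic_general {ι : Type*} {l : Filter ι} {x y : ι → ℝ}
    (hx : ∀ᶠ i in l, 0 ≤ x i) (hy : ∀ᶠ i in l, 0 ≤ y i)
    (hxy : Tendsto (fun i ↦ x i * y i) l atTop) :
    Tendsto
      (fun i ↦ (∑' a, poissonPMF (x i) a * poissonPMF (y i) a)
        * (2 * (x i * y i) ^ ((1 : ℝ) / 4) * √π) * exp ((√(x i) - √(y i)) ^ 2))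
      l (𝓝 1) := by
  have ht : Tendsto (fun i ↦ 2 * √(x i * y i)) l atTop :=
    (tendsto_sqrt_atTop.comp hxy).const_mul_atTop two_pos
  refine (tendsto_besselI₀_mul_sqrt_mul_exp_neg.comp ht).congr' ?_
  filter_upwards [hx, hy] with i hx hy
  have hscale : √(2 * π * (2 * √(x i * y i))) = 2 * (x i * y i) ^ ((1 : ℝ) / 4) * √π := by
    have hroot : √√(x i * y i) = (x i * y i) ^ ((1 : ℝ) / 4) := by
      rw [sqrt_eq_rpow, sqrt_eq_rpow, ← rpow_mul (mul_nonneg hx hy)]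
      norm_num
    rw [← hroot, show 2 * π * (2 * √(x i * y i)) = 2 ^ 2 * √(x i * y i) * π by ring,
      sqrt_mul (by positivity), sqrt_mul (by positivity), sqrt_sq two_pos.le]
  rw [Function.comp_apply, hscale, mul_right_comm, ← tsum_poissonPMF_mul_poissonPMF_mul_exp hx hy]
  ring

/-- **Exact-tie asymptotic underlying Proposition 5.** Fix `p, q > 0` and let `A_n`, `B_n` be
independent Poisson with means `np` and `nq`. Then as `n → ∞`,
`Pr(A_n = B_n) ∼ e^{-n(√p-√q)²} / (2 (pq)^{1/4} √(πn))`, i.e.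
`Pr(A_n = B_n) · 2 (pq)^{1/4} √(πn) · e^{n(√p-√q)²} → 1`, where
`Pr(A_n = B_n) = Σ_{a=0}^∞ f_{np}(a) f_{nq}(a)`. -/
theorem tie_probability_asymptotic (p q : ℝ) (hp : 0 < p) (hq : 0 < q) :
    Filter.Tendsto
      (fun n : ℝ =>
        (∑' a : ℕ, poissonPMF (n * p) a * poissonPMF (n * q) a)
          * (2 * (p * q) ^ ((1 : ℝ) / 4) * Real.sqrt (Real.pi * n))
          * Real.exp (n * (Real.sqrt p - Real.sqrt q) ^ 2))
      Filter.atTop (nhds 1) := by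
  have hmean {r : ℝ} (hr : 0 < r) : ∀ᶠ n : ℝ in atTop, 0 ≤ n * r :=
    (eventually_ge_atTop 0).mono fun n hn ↦ mul_nonneg hn hr.le
  have hprod : Tendsto (fun n : ℝ ↦ n * p * (n * q)) atTop atTop :=
    (tendsto_id.atTop_mul_const hp).atTop_mul_atTop₀ (tendsto_id.atTop_mul_const hq)
  refine (tie_probability_asymptotic_general (hmean hp) (hmean hq) hprod).congr' ?_
  filter_upwards [eventually_ge_atTop 0] with n hn
  have hroot : (n * p * (n * q)) ^ ((1 : ℝ) / 4) = √n * (p * q) ^ ((1 : ℝ) / 4) := by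
    rw [mul_mul_mul_comm, mul_rpow (mul_self_nonneg n) (by positivity), ← sq, sqrt_eq_rpow,
      ← rpow_natCast_mul hn]
    norm_num
  rw [hroot, sqrt_mul hn, sqrt_mul hn, ← mul_sub, mul_pow, sq_sqrt hn, sqrt_mul pi_pos.le]
  ring
end
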